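/- arXiv:1406.0168 — 2 statements merged into one kernel-verified Lean document; each statement's English description precedes it below -/
import Mathlib

section
/- There is an absolute constant C > 0 with the following property. Let t > 0, x ∈ ℝ², A > 0, and let F(s,y) (defined for 0 ≤ s < t, |y−x| ≤ t−s), G(s,y) and H(s,y) be nonnegative measurable functions such that, writing ξ = (y−x)/(t−s), one has F(s,y) ≤ A G(s,y)^{2/5} (1 − |ξ|²)^{−2/5} and F(s,y) ≤ A H(s,y)^{2/5} on the region {|y−x| ≤ t−s}. Then for every ε ∈ (0,1]: ∫₀ᵗ ∫_{|y−x| ≤ t−s} F(s,y) / ((t−s)√((t−s)² − |y−x|²)) dy ds ≤ C A (1+t) [ ε^{−1/10} ( ∫₀ᵗ ∫_{|y−x| ≤ t−s} G(s,y)/√((t−s)² − |y−x|²) dy ds )^{2/5} + ε^{3/10} ( ∫₀ᵗ ∫_{|y−x| ≤ t−s} H(s,y)/√((t−s)² − |y−x|²) dy ds )^{2/5} ]. -/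
open MeasureTheory Set
open scoped NNReal

abbrev E2 := EuclideanSpace ℝ (Fin 2)

lemma radial_lint (x : E2) (a b : ℝ) (ha : 0 ≤ a) (hab : a ≤ b) (g k : ℝ → ℝ)
    (hg : ContinuousOn g (Icc a b)) (hk : ∀ r ∈ Icc a b, 0 ≤ k r)
    (hd : ∀ r ∈ Ioo a b, HasDerivAt g (r * k r) r) :
    ∫⁻ y : E2, ENNReal.ofReal ((Icc a b).indicator k (dist y x))
      = ENNReal.ofReal ((2 * (volume : Measure E2).real (Metric.ball 0 1)) * (g b - g a)) := by
  have hint : IntegrableOn (fun r => r * k r) (Ioc a b) :=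
    intervalIntegral.integrableOn_deriv_of_nonneg hg hd
      (fun r hr => mul_nonneg (ha.trans hr.1.le) (hk r ⟨hr.1.le, hr.2.le⟩))
  have hval : ∫ r in Ioc a b, r * k r = g b - g a := by
    rw [← intervalIntegral.integral_of_le hab]
    exact intervalIntegral.integral_eq_sub_of_hasDerivAt_of_le hab hg hd
      ((intervalIntegrable_iff_integrableOn_Ioc_of_le hab).2 hint)
  have hfun : (fun r : ℝ => r ^ (Module.finrank ℝ E2 - 1) • (Icc a b).indicator k r)
      = (Icc a b).indicator (fun r => r * k r) := by
    ext r
    by_cases h : r ∈ Icc a b <;> simp [h]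
  have hinter : Icc a b ∩ Ici 0 = Icc a b := by
    apply inter_eq_left.2
    intro r hr
    exact ha.trans hr.1
  have hI : IntegrableOn (fun r : ℝ => r ^ (Module.finrank ℝ E2 - 1) • (Icc a b).indicator k r)
      (Ioi 0) := by
    rw [hfun]
    apply Integrable.integrableOn
    rw [integrable_indicator_iff measurableSet_Icc, integrableOn_Icc_iff_integrableOn_Ioc]
    exact hint
  have hV : ∫ r in Ioi (0:ℝ), r ^ (Module.finrank ℝ E2 - 1) • (Icc a b).indicator k r
      = g b - g a := by
    rw [hfun, ← integral_Ici_eq_integral_Ioi, setIntegral_indicator measurableSet_Icc,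
      inter_comm, hinter, integral_Icc_eq_integral_Ioc, hval]
  have h1 := (integrable_fun_norm_addHaar (volume : Measure E2)).2 hI
  have h2 := integral_fun_norm_addHaar (volume : Measure E2) ((Icc a b).indicator k)
  rw [hV] at h2
  have h3 : ∫⁻ y : E2, ENNReal.ofReal ((Icc a b).indicator k (dist y x))
      = ∫⁻ y : E2, ENNReal.ofReal ((Icc a b).indicator k ‖y‖) := by
    simp only [dist_eq_norm]
    exact lintegral_sub_right_eq_self
      (fun y : E2 => ENNReal.ofReal ((Icc a b).indicator k ‖y‖)) x
  rw [h3, ← ofReal_integral_eq_lintegral_ofReal h1, h2]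
  · congr 1
    simp [mul_assoc]
  · refine Filter.Eventually.of_forall fun y => ?_
    exact indicator_nonneg hk _

lemma time_lint (t : ℝ) (ht : 0 < t) :
    ∫⁻ s in Ioo (0:ℝ) t, ENNReal.ofReal ((t - s) ^ (-(2/3) : ℝ))
      = ENNReal.ofReal (3 * t ^ ((1:ℝ)/3)) := by
  have hc : ContinuousOn (fun s : ℝ => -(3 * (t - s) ^ ((1:ℝ)/3))) (Icc 0 t) := by
    apply Continuous.continuousOn
    have : Continuous fun s : ℝ => (t - s) ^ ((1:ℝ)/3) :=
      (continuous_const.sub continuous_id).rpow_const (fun _ => Or.inr (by norm_num))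
    fun_prop
  have hd : ∀ s ∈ Ioo 0 t, HasDerivAt (fun s : ℝ => -(3 * (t - s) ^ ((1:ℝ)/3)))
      ((t - s) ^ (-(2/3) : ℝ)) s := by
    intro s hs
    have h0 : HasDerivAt (fun s : ℝ => t - s) (-1) s := by
      simpa using (hasDerivAt_id s).const_sub t
    have := ((h0.rpow_const (p := (1:ℝ)/3) (Or.inl (sub_pos.2 hs.2).ne')).const_mul 3).neg
    refine HasDerivAt.congr_deriv this ?_
    norm_num
    ring
  have hp : ∀ s ∈ Ioo 0 t, 0 ≤ (t - s) ^ (-(2/3) : ℝ) := fun s hs =>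
    Real.rpow_nonneg (sub_pos.2 hs.2).le _
  have hint := intervalIntegral.integrableOn_deriv_of_nonneg hc hd hp
  have hval := intervalIntegral.integral_eq_sub_of_hasDerivAt_of_le ht.le hc hd
      ((intervalIntegrable_iff_integrableOn_Ioc_of_le ht.le).2 hint)
  rw [intervalIntegral.integral_of_le ht.le, integral_Ioc_eq_integral_Ioo] at hval
  rw [← ofReal_integral_eq_lintegral_ofReal (hint.mono_set Ioo_subset_Ioc_self), hval]
  · simp
  · exact (ae_restrict_iff' measurableSet_Ioo).2 (Filter.Eventually.of_forall hp)

lemma meas_inner (t : ℝ) (x : E2) (G : ℝ → E2 → ℝ) (hG : Measurable (Function.uncurry G)) :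
    Measurable fun s => ∫⁻ y in {y | dist y x ≤ t - s},
      ENNReal.ofReal (G s y / Real.sqrt ((t - s) ^ 2 - dist y x ^ 2)) := by
  have hm : Measurable fun p : ℝ × E2 =>
      ENNReal.ofReal (G p.1 p.2 / Real.sqrt ((t - p.1) ^ 2 - dist p.2 x ^ 2)) := by
    have : Measurable fun p : ℝ × E2 => G p.1 p.2 := hG
    fun_prop
  have hS : MeasurableSet {p : ℝ × E2 | dist p.2 x ≤ t - p.1} := by
    apply measurableSet_le <;> fun_prop
  have := (hm.indicator hS).lintegral_prod_right' (ν := (volume : Measure E2))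
  convert this using 2 with s
  rw [← lintegral_indicator]
  · rfl
  · apply measurableSet_le <;> fun_prop

lemma outer_holder (t : ℝ) (ht : 0 < t) (g : ℝ → ENNReal) (hg : Measurable g) (B : ENNReal) :
    ∫⁻ s in Ioo (0:ℝ) t, g s ^ ((2:ℝ)/5) *
        (B * ENNReal.ofReal ((t - s) ^ (-(2/3) : ℝ))) ^ ((3:ℝ)/5)
      ≤ (∫⁻ s in Ioo (0:ℝ) t, g s) ^ ((2:ℝ)/5) *
        (B * ENNReal.ofReal (3 * t ^ ((1:ℝ)/3))) ^ ((3:ℝ)/5) := by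
  rw [← time_lint t ht, ← lintegral_const_mul _ (by fun_prop)]
  exact ENNReal.lintegral_mul_norm_pow_le hg.aemeasurable (by fun_prop)
    (by norm_num) (by norm_num) (by norm_num)

lemma K1_bound (x : E2) (τ ε : ℝ) (hτ : 0 < τ) (hε : 0 < ε) (hε1 : ε ≤ 1) :
    ∫⁻ y : E2, ENNReal.ofReal ((Icc 0 (τ * √(1 - ε))).indicator
      (fun r => τ ^ (-(1/3) : ℝ) * (τ ^ 2 - r ^ 2) ^ (-(7/6) : ℝ)) (dist y x))
    ≤ ENNReal.ofReal (2 * (volume : Measure E2).real (Metric.ball 0 1) * 3 * ε ^ (-(1/6) : ℝ))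
      * ENNReal.ofReal (τ ^ (-(2/3) : ℝ)) := by
  have hsq : (τ * √(1 - ε)) ^ 2 = τ ^ 2 - ε * τ ^ 2 := by
    rw [mul_pow, Real.sq_sqrt (by linarith)]; ring
  have ha : 0 ≤ τ * √(1 - ε) := by positivity
  have hD : ∀ r ∈ Icc 0 (τ * √(1 - ε)), 0 < τ ^ 2 - r ^ 2 := by
    intro r hr
    have : r ^ 2 ≤ (τ * √(1 - ε)) ^ 2 := pow_le_pow_left₀ hr.1 hr.2 2
    have : 0 < ε * τ ^ 2 := by positivity
    linarith
  rw [radial_lint x 0 (τ * √(1 - ε)) le_rfl ha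
    (fun r => τ ^ (-(1/3) : ℝ) * (3 * (τ ^ 2 - r ^ 2) ^ (-(1/6) : ℝ)))]
  · rw [← ENNReal.ofReal_mul (by positivity)]
    apply ENNReal.ofReal_le_ofReal
    rw [mul_assoc (2 * _), mul_assoc (2 * _)]
    gcongr
    rw [hsq]
    have e1 : (τ ^ 2 - (τ ^ 2 - ε * τ ^ 2)) ^ (-(1/6) : ℝ)
        = ε ^ (-(1/6) : ℝ) * τ ^ (-(1/3) : ℝ) := by
      rw [sub_sub_cancel, Real.mul_rpow hε.le (by positivity), ← Real.rpow_natCast,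
        ← Real.rpow_mul hτ.le]
      norm_num
    have e2 : τ ^ (-(2/3) : ℝ) = τ ^ (-(1/3) : ℝ) * τ ^ (-(1/3) : ℝ) := by
      rw [← Real.rpow_add hτ]; norm_num
    rw [e1, e2]
    have : 0 ≤ τ ^ (-(1/3) : ℝ) * (3 * (τ ^ 2 - 0 ^ 2) ^ (-(1/6) : ℝ)) := by
      have : 0 ≤ τ ^ 2 - 0 ^ 2 := by simp; positivity
      positivity
    linarith
  · apply ContinuousOn.mul continuousOn_const
    apply ContinuousOn.mul continuousOn_const
    apply ContinuousOn.rpow_const (by fun_prop)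
    intro r hr
    exact Or.inl (hD r hr).ne'
  · intro r hr
    have := hD r hr
    positivity
  · intro r hr
    have hr' := hD r ⟨hr.1.le, hr.2.le⟩
    have h0 : HasDerivAt (fun r : ℝ => τ ^ 2 - r ^ 2) (-(2 * r)) r := by
      simpa using (hasDerivAt_pow 2 r).const_sub (τ ^ 2)
    have := ((h0.rpow_const (p := (-(1/6) : ℝ)) (Or.inl hr'.ne')).const_mul 3).const_mul
      (τ ^ (-(1/3) : ℝ))
    refine HasDerivAt.congr_deriv this ?_
    norm_num
    ring

lemma K2_bound (x : E2) (τ ε : ℝ) (hτ : 0 < τ) (hε : 0 < ε) (hε1 : ε ≤ 1) :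
    ∫⁻ y : E2, ENNReal.ofReal ((Icc (τ * √(1 - ε)) τ).indicator
      (fun r => τ ^ (-(5/3) : ℝ) * (τ ^ 2 - r ^ 2) ^ (-(1/2) : ℝ)) (dist y x))
    ≤ ENNReal.ofReal (2 * (volume : Measure E2).real (Metric.ball 0 1) * 3 * ε ^ ((1:ℝ)/2))
      * ENNReal.ofReal (τ ^ (-(2/3) : ℝ)) := by
  have hsq : (τ * √(1 - ε)) ^ 2 = τ ^ 2 - ε * τ ^ 2 := by
    rw [mul_pow, Real.sq_sqrt (by linarith)]; ring
  have ha : 0 ≤ τ * √(1 - ε) := by positivity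
  have hab : τ * √(1 - ε) ≤ τ := by
    apply mul_le_of_le_one_right hτ.le
    exact Real.sqrt_le_one.2 (by linarith)
  have hD : ∀ r ∈ Icc (τ * √(1 - ε)) τ, 0 ≤ τ ^ 2 - r ^ 2 := by
    intro r hr
    have : r ^ 2 ≤ τ ^ 2 := pow_le_pow_left₀ (ha.trans hr.1) hr.2 2
    linarith
  rw [radial_lint x (τ * √(1 - ε)) τ ha hab
    (fun r => - (τ ^ (-(5/3) : ℝ) * (τ ^ 2 - r ^ 2) ^ ((1:ℝ)/2)))]
  · rw [← ENNReal.ofReal_mul (by positivity)]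
    apply ENNReal.ofReal_le_ofReal
    rw [mul_assoc (2 * _), mul_assoc (2 * _)]
    gcongr
    rw [hsq]
    have e1 : (τ ^ 2 - (τ ^ 2 - ε * τ ^ 2)) ^ ((1:ℝ)/2)
        = ε ^ ((1:ℝ)/2) * τ := by
      rw [sub_sub_cancel, Real.mul_rpow hε.le (by positivity), ← Real.rpow_natCast,
        ← Real.rpow_mul hτ.le]
      norm_num
    have e2 : τ ^ (-(2/3) : ℝ) = τ ^ (-(5/3) : ℝ) * τ := by
      nth_rewrite 3 [← Real.rpow_one τ]
      rw [← Real.rpow_add hτ]; norm_num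
    rw [e1, e2]
    have : 0 ≤ τ ^ (-(5/3) : ℝ) * (ε ^ ((1:ℝ)/2) * τ) := by positivity
    simp
    norm_num at this
    linarith
  · apply ContinuousOn.neg
    apply ContinuousOn.mul continuousOn_const
    apply ContinuousOn.rpow_const (by fun_prop)
    intro r hr
    exact Or.inr (by norm_num)
  · intro r hr
    have := hD r hr
    positivity
  · intro r hr
    have hr' : 0 < τ ^ 2 - r ^ 2 := by
      have : r ^ 2 < τ ^ 2 := pow_lt_pow_left₀ hr.2 (ha.trans hr.1.le) (by norm_num)
      linarith
    have h0 : HasDerivAt (fun r : ℝ => τ ^ 2 - r ^ 2) (-(2 * r)) r := by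
      simpa using (hasDerivAt_pow 2 r).const_sub (τ ^ 2)
    have := ((h0.rpow_const (p := ((1:ℝ)/2)) (Or.inl hr'.ne')).const_mul
      (τ ^ (-(5/3) : ℝ))).neg
    refine HasDerivAt.congr_deriv this ?_
    norm_num
    ring

lemma alg1 (τ r A F G : ℝ) (hτ : 0 < τ) (hr : 0 ≤ r) (hrτ : r < τ) (hG : 0 ≤ G)
    (h : F ≤ A * G ^ ((2:ℝ)/5) * (1 - (r / τ) ^ 2) ^ (-(2/5) : ℝ)) :
    F / (τ * √(τ ^ 2 - r ^ 2)) ≤ A * ((G / √(τ ^ 2 - r ^ 2)) ^ ((2:ℝ)/5) *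
      (τ ^ (-(1/3) : ℝ) * (τ ^ 2 - r ^ 2) ^ (-(7/6) : ℝ)) ^ ((3:ℝ)/5)) := by
  have hD : 0 < τ ^ 2 - r ^ 2 := by nlinarith
  have e : 1 - (r / τ) ^ 2 = (τ ^ 2 - r ^ 2) * τ ^ (-2 : ℝ) := by
    rw [Real.rpow_neg hτ.le]; norm_cast; field_simp
  rw [e] at h
  generalize τ ^ 2 - r ^ 2 = D at *
  rw [Real.mul_rpow hD.le (by positivity), ← Real.rpow_mul hτ.le] at h
  rw [Real.sqrt_eq_rpow, Real.div_rpow hG (by positivity), Real.mul_rpow (by positivity)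
    (by positivity), ← Real.rpow_mul hτ.le, ← Real.rpow_mul hD.le, ← Real.rpow_mul hD.le,
    div_le_iff₀ (by positivity)]
  refine h.trans (le_of_eq ?_)
  have e1 : τ ^ (-2 * -(2/5) : ℝ) = τ ^ (-(1/3) * (3/5) : ℝ) * τ := by
    nth_rewrite 3 [← Real.rpow_one τ]
    rw [← Real.rpow_add hτ]; norm_num
  have e2 : D ^ (-(2/5) : ℝ) = (D ^ (1/2 * (2/5) : ℝ))⁻¹ * D ^ (-(7/6) * (3/5) : ℝ) *
      D ^ ((1:ℝ)/2) := by
    rw [← Real.rpow_neg hD.le, ← Real.rpow_add hD, ← Real.rpow_add hD]; norm_num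
  rw [e1, e2]
  ring

lemma alg2 (τ r A F H : ℝ) (hτ : 0 < τ) (hr : 0 ≤ r) (hrτ : r < τ) (hH : 0 ≤ H)
    (h : F ≤ A * H ^ ((2:ℝ)/5)) :
    F / (τ * √(τ ^ 2 - r ^ 2)) ≤ A * ((H / √(τ ^ 2 - r ^ 2)) ^ ((2:ℝ)/5) *
      (τ ^ (-(5/3) : ℝ) * (τ ^ 2 - r ^ 2) ^ (-(1/2) : ℝ)) ^ ((3:ℝ)/5)) := by
  have hD : 0 < τ ^ 2 - r ^ 2 := by nlinarith
  generalize τ ^ 2 - r ^ 2 = D at *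
  rw [Real.sqrt_eq_rpow, Real.div_rpow hH (by positivity), Real.mul_rpow (by positivity)
    (by positivity), ← Real.rpow_mul hτ.le, ← Real.rpow_mul hD.le, ← Real.rpow_mul hD.le,
    div_le_iff₀ (by positivity)]
  refine h.trans (le_of_eq ?_)
  have e1 : 1 = τ ^ (-(5/3) * (3/5) : ℝ) * τ := by
    nth_rewrite 2 [← Real.rpow_one τ]
    rw [← Real.rpow_add hτ]; norm_num
  have e2 : 1 = (D ^ (1/2 * (2/5) : ℝ))⁻¹ * D ^ (-(1/2) * (3/5) : ℝ) *
      D ^ ((1:ℝ)/2) := by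
    rw [← Real.rpow_neg hD.le, ← Real.rpow_add hD, ← Real.rpow_add hD]; norm_num
  calc A * H ^ ((2:ℝ)/5) = A * H ^ ((2:ℝ)/5) * 1 * 1 := by ring
    _ = A * H ^ ((2:ℝ)/5) * (τ ^ (-(5/3) * (3/5) : ℝ) * τ) * ((D ^ (1/2 * (2/5) : ℝ))⁻¹ *
      D ^ (-(1/2) * (3/5) : ℝ) * D ^ ((1:ℝ)/2)) := by rw [← e1, ← e2]
    _ = _ := by ring

lemma inner_holder (S : Set E2) (u v : E2 → ENNReal) (hu : Measurable u) (hv : Measurable v)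
    (K : ENNReal) (hK : ∫⁻ y, v y ≤ K) :
    ∫⁻ y in S, u y ^ ((2:ℝ)/5) * v y ^ ((3:ℝ)/5)
      ≤ (∫⁻ y in S, u y) ^ ((2:ℝ)/5) * K ^ ((3:ℝ)/5) := by
  refine (ENNReal.lintegral_mul_norm_pow_le hu.aemeasurable hv.aemeasurable
    (by norm_num) (by norm_num) (by norm_num)).trans ?_
  gcongr
  exact (setLIntegral_le_lintegral _ _).trans hK

lemma to_enn (A a b c : ℝ) (hA : 0 ≤ A) (hb : 0 ≤ b) (hc : 0 ≤ c)
    (h : a ≤ A * (b ^ ((2:ℝ)/5) * c ^ ((3:ℝ)/5))) :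
    ENNReal.ofReal a ≤ ENNReal.ofReal A *
      (ENNReal.ofReal b ^ ((2:ℝ)/5) * ENNReal.ofReal c ^ ((3:ℝ)/5)) := by
  rw [ENNReal.ofReal_rpow_of_nonneg hb (by norm_num),
    ENNReal.ofReal_rpow_of_nonneg hc (by norm_num), ← ENNReal.ofReal_mul (by positivity),
    ← ENNReal.ofReal_mul hA]
  exact ENNReal.ofReal_le_ofReal h

lemma const_bound (c t ε p q : ℝ) (hc : 0 ≤ c) (ht : 0 < t) (hε : 0 < ε) (hpq : p * (3/5) = q) :
    (ENNReal.ofReal (c * 3 * ε ^ p) * ENNReal.ofReal (3 * t ^ ((1:ℝ)/3))) ^ ((3:ℝ)/5)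
      ≤ ENNReal.ofReal ((9 * c) ^ ((3:ℝ)/5) + 1) * ENNReal.ofReal (1 + t) *
        ENNReal.ofReal ε ^ q := by
  rw [ENNReal.ofReal_rpow_of_pos hε, ← ENNReal.ofReal_mul (by positivity),
    ← ENNReal.ofReal_mul (by positivity), ← ENNReal.ofReal_mul (by positivity),
    ENNReal.ofReal_rpow_of_nonneg (by positivity) (by norm_num)]
  apply ENNReal.ofReal_le_ofReal
  have e : c * 3 * ε ^ p * (3 * t ^ ((1:ℝ)/3)) = (9 * c) * t ^ ((1:ℝ)/3) * ε ^ p := by ring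
  rw [e, Real.mul_rpow (by positivity) (by positivity), Real.mul_rpow (by positivity)
    (by positivity), ← Real.rpow_mul hε.le, hpq, ← Real.rpow_mul ht.le]
  gcongr
  · linarith
  · calc t ^ ((1:ℝ)/3 * (3/5)) ≤ (1 + t) ^ ((1:ℝ)/3 * (3/5)) := by gcongr; linarith
      _ ≤ (1 + t) ^ (1:ℝ) := Real.rpow_le_rpow_of_exponent_le (by linarith) (by norm_num)
      _ = 1 + t := Real.rpow_one _

/-- **Abstract cone estimate** (the content of Propositions 5.3/5.4 and Remarks 5.1/5.2).
There is an absolute constant `C` such that: if `F, G, H ≥ 0` satisfy, on the region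
`{|y−x| ≤ t−s}` with `ξ = (y−x)/(t−s)`, the pointwise bounds
`F ≤ A G^{2/5} (1−|ξ|²)^{−2/5}` and `F ≤ A H^{2/5}`, then for every `ε ∈ (0,1]`,
`∫₀ᵗ∫_{|y−x|≤t−s} F/((t−s)√((t−s)²−|y−x|²)) ≤ C A (1+t) [ε^{−1/10} (∫₀ᵗ∫ G/√(...))^{2/5}
  + ε^{3/10} (∫₀ᵗ∫ H/√(...))^{2/5}]`. -/
theorem abstract_cone_estimate :
    ∃ C : ℝ≥0, 0 < C ∧
      ∀ (t : ℝ), 0 < t → ∀ (x : EuclideanSpace ℝ (Fin 2)) (A : ℝ), 0 < A →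
      ∀ (F G H : ℝ → EuclideanSpace ℝ (Fin 2) → ℝ),
        Measurable (Function.uncurry F) →
        Measurable (Function.uncurry G) →
        Measurable (Function.uncurry H) →
        (∀ s y, 0 ≤ F s y) → (∀ s y, 0 ≤ G s y) → (∀ s y, 0 ≤ H s y) →
        (∀ s y, 0 ≤ s → s < t → dist y x < t - s →
          F s y ≤ A * G s y ^ ((2 : ℝ) / 5)
            * (1 - (dist y x / (t - s)) ^ 2) ^ (-(2 / 5) : ℝ)) →
        (∀ s y, 0 ≤ s → s < t → dist y x ≤ t - s →
          F s y ≤ A * H s y ^ ((2 : ℝ) / 5)) →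
        ∀ ε : ℝ, 0 < ε → ε ≤ 1 →
          (∫⁻ s in Ioc (0 : ℝ) t, ∫⁻ y in {y | dist y x ≤ t - s},
              ENNReal.ofReal (F s y / ((t - s) * Real.sqrt ((t - s) ^ 2 - dist y x ^ 2))))
            ≤ C * ENNReal.ofReal (A * (1 + t)) *
              (ENNReal.ofReal ε ^ (-(1 / 10) : ℝ) *
                (∫⁻ s in Ioc (0 : ℝ) t, ∫⁻ y in {y | dist y x ≤ t - s},
                  ENNReal.ofReal (G s y / Real.sqrt ((t - s) ^ 2 - dist y x ^ 2)))
                    ^ ((2 : ℝ) / 5)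
              + ENNReal.ofReal ε ^ ((3 : ℝ) / 10) *
                (∫⁻ s in Ioc (0 : ℝ) t, ∫⁻ y in {y | dist y x ≤ t - s},
                  ENNReal.ofReal (H s y / Real.sqrt ((t - s) ^ 2 - dist y x ^ 2)))
                    ^ ((2 : ℝ) / 5)) := by
  set c : ℝ := 2 * (volume : Measure E2).real (Metric.ball 0 1) with hcdef
  have hc : 0 ≤ c := by positivity
  refine ⟨Real.toNNReal ((9 * c) ^ ((3:ℝ)/5) + 1), by
    rw [Real.toNNReal_pos]; positivity, ?_⟩
  intro t ht x A hA F G H hFm hGm hHm hF hG hH h1 h2 ε hε hε1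
  rw [← restrict_Ioo_eq_restrict_Ioc]
  have hg := meas_inner t x G hGm
  have hh := meas_inner t x H hHm
  set g : ℝ → ENNReal := fun s => ∫⁻ y in {y | dist y x ≤ t - s},
      ENNReal.ofReal (G s y / Real.sqrt ((t - s) ^ 2 - dist y x ^ 2)) with hgdef
  set h : ℝ → ENNReal := fun s => ∫⁻ y in {y | dist y x ≤ t - s},
      ENNReal.ofReal (H s y / Real.sqrt ((t - s) ^ 2 - dist y x ^ 2)) with hhdef
  set B1 : ENNReal := ENNReal.ofReal (c * 3 * ε ^ (-(1/6) : ℝ))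
  set B2 : ENNReal := ENNReal.ofReal (c * 3 * ε ^ ((1:ℝ)/2))
  have key : ∀ s ∈ Ioo (0:ℝ) t, ∫⁻ y in {y | dist y x ≤ t - s},
        ENNReal.ofReal (F s y / ((t - s) * Real.sqrt ((t - s) ^ 2 - dist y x ^ 2)))
      ≤ ENNReal.ofReal A * (g s ^ ((2:ℝ)/5) *
          (B1 * ENNReal.ofReal ((t - s) ^ (-(2/3) : ℝ))) ^ ((3:ℝ)/5)
        + h s ^ ((2:ℝ)/5) *
          (B2 * ENNReal.ofReal ((t - s) ^ (-(2/3) : ℝ))) ^ ((3:ℝ)/5)) := by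
    intro s hs
    have hτ : 0 < t - s := sub_pos.2 hs.2
    have hGs : Measurable (G s) := hGm.of_uncurry_left
    have hHs : Measurable (H s) := hHm.of_uncurry_left
    set k1 : E2 → ℝ := fun y => (Icc 0 ((t - s) * √(1 - ε))).indicator
      (fun r => (t - s) ^ (-(1/3) : ℝ) * ((t - s) ^ 2 - r ^ 2) ^ (-(7/6) : ℝ)) (dist y x) with hk1
    set k2 : E2 → ℝ := fun y => (Icc ((t - s) * √(1 - ε)) (t - s)).indicator
      (fun r => (t - s) ^ (-(5/3) : ℝ) * ((t - s) ^ 2 - r ^ 2) ^ (-(1/2) : ℝ)) (dist y x) with hk2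
    have hk1m : Measurable k1 := by
      refine Measurable.comp (Measurable.indicator ?_ measurableSet_Icc) (by fun_prop)
      fun_prop
    have hk2m : Measurable k2 := by
      refine Measurable.comp (Measurable.indicator ?_ measurableSet_Icc) (by fun_prop)
      fun_prop
    have i1 := inner_holder {y | dist y x ≤ t - s}
      (fun y => ENNReal.ofReal (G s y / Real.sqrt ((t - s) ^ 2 - dist y x ^ 2)))
      (fun y => ENNReal.ofReal (k1 y)) (by fun_prop) (by fun_prop) _
      (K1_bound x (t - s) ε hτ hε hε1)
    have i2 := inner_holder {y | dist y x ≤ t - s}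
      (fun y => ENNReal.ofReal (H s y / Real.sqrt ((t - s) ^ 2 - dist y x ^ 2)))
      (fun y => ENNReal.ofReal (k2 y)) (by fun_prop) (by fun_prop) _
      (K2_bound x (t - s) ε hτ hε hε1)
    refine le_trans ?_ (mul_le_mul_right (add_le_add i1 i2) _)
    rw [← lintegral_add_left (by fun_prop), ← lintegral_const_mul _ (by fun_prop)]
    apply setLIntegral_mono (by fun_prop)
    intro y hy
    have hy' : dist y x ≤ t - s := hy
    rw [mul_add]
    rcases hy'.eq_or_lt with heq | hlt
    · simp [heq]
    have hd0 : 0 ≤ dist y x := dist_nonneg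
    have hD : 0 ≤ (t - s) ^ 2 - dist y x ^ 2 := by nlinarith
    by_cases hcase : dist y x ≤ (t - s) * √(1 - ε)
    · refine le_trans ?_ le_self_add
      have hm : dist y x ∈ Icc 0 ((t - s) * √(1 - ε)) := ⟨hd0, hcase⟩
      have hk : k1 y = (t - s) ^ (-(1/3) : ℝ) * ((t - s) ^ 2 - dist y x ^ 2) ^ (-(7/6) : ℝ) := by
        simp only [hk1, indicator_of_mem hm]
      rw [hk]
      exact to_enn _ _ _ _ hA.le (div_nonneg (hG s y) (Real.sqrt_nonneg _)) (by positivity)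
        (alg1 _ _ _ _ _ hτ hd0 hlt (hG s y) (h1 s y hs.1.le hs.2 hlt))
    · refine le_trans ?_ le_add_self
      have hm : dist y x ∈ Icc ((t - s) * √(1 - ε)) (t - s) := ⟨(not_le.1 hcase).le, hy'⟩
      have hk : k2 y = (t - s) ^ (-(5/3) : ℝ) * ((t - s) ^ 2 - dist y x ^ 2) ^ (-(1/2) : ℝ) := by
        simp only [hk2, indicator_of_mem hm]
      rw [hk]
      exact to_enn _ _ _ _ hA.le (div_nonneg (hH s y) (Real.sqrt_nonneg _)) (by positivity)
        (alg2 _ _ _ _ _ hτ hd0 hlt (hH s y) (h2 s y hs.1.le hs.2 hy'))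
  refine (setLIntegral_mono (by fun_prop) key).trans ?_
  rw [lintegral_const_mul _ (by fun_prop), lintegral_add_left (by fun_prop)]
  refine (mul_le_mul_right (add_le_add (outer_holder t ht g hg B1)
    (outer_holder t ht h hh B2)) _).trans ?_
  have c1 := const_bound c t ε (-(1/6)) (-(1/10)) hc ht hε (by norm_num)
  have c2 := const_bound c t ε (1/2) (3/10) hc ht hε (by norm_num)
  refine (mul_le_mul_right (add_le_add (mul_le_mul_right c1 _) (mul_le_mul_right c2 _)) _).trans
    (le_of_eq ?_)
  rw [ENNReal.ofReal_mul hA.le]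
  change _ = ENNReal.ofReal ((9 * c) ^ ((3:ℝ)/5) + 1) * _ * _
  ring
end

section
/- Let C₀ > 0, t > 0 and x ∈ ℝ². Let f : [0,t] × ℝ² × ℝ² → [0,∞) be measurable with f(s,y,p) ≤ C₀ almost everywhere. Then there is a constant C, depending only on C₀, such that for every ε ∈ (0,1]: ∫₀ᵗ ∫_{|y−x| ≤ t−s} ∫_{ℝ²} f(s,y,p) / ( p_0 (1 + p̂·ξ) (t−s) √((t−s)² − |y−x|²) ) dp dy ds ≤ C (1+t) [ ε^{−1/10} ( ∫₀ᵗ ∫_{|y−x| ≤ t−s} (∫_{ℝ²} p_0² f(s,y,p) dp) / √((t−s)² − |y−x|²) dy ds )^{2/5} + ε^{3/10} ( ∫₀ᵗ ∫_{|y−x| ≤ t−s} (∫_{ℝ²} p_0⁴ f(s,y,p) dp) / √((t−s)² − |y−x|²) dy ds )^{2/5} ]. (This integral dominates the term K_T in the Glassey–Schaeffer representation of the electromagnetic field in two dimensions.) -/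
open MeasureTheory Set
open scoped NNReal RealInnerProductSpace

/-- `p₀ = √(1 + |p|²)` for `p ∈ ℝ²`. -/
noncomputable def pZero (p : EuclideanSpace ℝ (Fin 2)) : ℝ := Real.sqrt (1 + ‖p‖ ^ 2)

/-- `p̂ = p / p₀` for `p ∈ ℝ²`. -/
noncomputable def pHat (p : EuclideanSpace ℝ (Fin 2)) : EuclideanSpace ℝ (Fin 2) :=
  (pZero p)⁻¹ • p

namespace KT2d

abbrev E2 := EuclideanSpace ℝ (Fin 2)

lemma pZero_sq (p : E2) : pZero p ^ 2 = 1 + ‖p‖ ^ 2 := by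
  unfold pZero; exact Real.sq_sqrt (by positivity)

lemma one_le_pZero (p : E2) : 1 ≤ pZero p := by
  unfold pZero; rw [Real.one_le_sqrt]; nlinarith [sq_nonneg ‖p‖]

lemma norm_lt_pZero (p : E2) : ‖p‖ < pZero p := by
  have h := pZero_sq p
  have h1 := one_le_pZero p
  nlinarith [norm_nonneg p]

lemma measurable_pZero : Measurable pZero := by
  unfold pZero; fun_prop

lemma pZero_mul (p ξ : E2) : pZero p * (1 + ⟪pHat p, ξ⟫) = pZero p + ⟪p, ξ⟫ := by
  have h1 := one_le_pZero p
  unfold pHat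
  rw [real_inner_smul_left]
  field_simp

lemma abs_inner_le (p ξ : E2) (hξ : ‖ξ‖ ≤ 1) : |⟪p, ξ⟫| ≤ ‖p‖ := by
  have := abs_real_inner_le_norm p ξ
  nlinarith [norm_nonneg p]

lemma q_pos (p ξ : E2) (hξ : ‖ξ‖ ≤ 1) : 0 < pZero p + ⟪p, ξ⟫ := by
  have := abs_le.1 (abs_inner_le p ξ hξ)
  linarith [norm_lt_pZero p]

lemma inv_q_le (p ξ : E2) (hξ : ‖ξ‖ ≤ 1) : (pZero p + ⟪p, ξ⟫)⁻¹ ≤ 2 * pZero p := by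
  have h := abs_le.1 (abs_inner_le p ξ hξ)
  have h2 := norm_lt_pZero p
  have h3 := q_pos p ξ hξ
  have h4 := pZero_sq p
  have h5 := one_le_pZero p
  rw [inv_le_iff_one_le_mul₀ h3]
  nlinarith [norm_nonneg p]


/-- identification of the Euclidean plane with `ℝ × ℝ` -/
lemma lintegral_E2 (F : ℝ × ℝ → ENNReal) :
    ∫⁻ p : E2, F (p 0, p 1) = ∫⁻ z : ℝ × ℝ, F z := by
  have h := (volume_preserving_finTwoArrow ℝ).comp
    (EuclideanSpace.volume_preserving_symm_measurableEquiv_toLp (Fin 2))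
  rw [← h.lintegral_comp_emb ((MeasurableEquiv.finTwoArrow.measurableEmbedding).comp
    (MeasurableEquiv.measurableEmbedding _))]
  rfl

lemma norm_E2 (p : E2) : ‖p‖ = Real.sqrt (p 0 ^ 2 + p 1 ^ 2) := by
  rw [EuclideanSpace.norm_eq]; simp

lemma lintegral_radial (F : ℝ → ENNReal) (hF : Measurable F) :
    ∫⁻ p : E2, F ‖p‖ =
      ENNReal.ofReal (2 * Real.pi) * ∫⁻ r in Ioi (0 : ℝ), ENNReal.ofReal r * F r := by
  have h1 : ∫⁻ p : E2, F ‖p‖ = ∫⁻ z : ℝ × ℝ, F (Real.sqrt (z.1 ^ 2 + z.2 ^ 2)) := by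
    rw [← lintegral_E2]; simp only [norm_E2]
  rw [h1, ← lintegral_comp_polarCoord_symm]
  have h2 : ∀ z ∈ polarCoord.target, ENNReal.ofReal z.1 •
      F (Real.sqrt ((polarCoord.symm z).1 ^ 2 + (polarCoord.symm z).2 ^ 2)) =
      ENNReal.ofReal z.1 * F z.1 := by
    intro z hz
    have hz1 : 0 < z.1 := hz.1
    have : (polarCoord.symm z).1 ^ 2 + (polarCoord.symm z).2 ^ 2 = z.1 ^ 2 := by
      simp only [polarCoord_symm_apply]
      nlinarith [Real.sin_sq_add_cos_sq z.2]
    rw [this, Real.sqrt_sq hz1.le, smul_eq_mul]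
  rw [setLIntegral_congr_fun polarCoord.open_target.measurableSet h2, polarCoord_target,
    Measure.volume_eq_prod, ← Measure.prod_restrict,
    lintegral_prod _ (by fun_prop)]
  simp only [lintegral_const, Measure.restrict_apply MeasurableSet.univ, univ_inter,
    Real.volume_Ioo]
  rw [lintegral_mul_const _ (by fun_prop), mul_comm]
  congr 2; ring

end KT2d

namespace KT2d

lemma lintegral_low_e (R : ℝ) (hR : 0 < R) (l : ℝ) (hl0 : 0 ≤ l) (hl : l ≤ 1) :
    ∫⁻ p : E2, {p : E2 | pZero p ≤ R}.indicator
      (fun p => ENNReal.ofReal ((pZero p + ⟪p, l • EuclideanSpace.single (0 : Fin 2) (1 : ℝ)⟫)⁻¹)) p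
      ≤ ENNReal.ofReal (4 * Real.pi * R ^ 2) := by
  have hn : ‖l • (EuclideanSpace.single (0 : Fin 2) (1 : ℝ) : E2)‖ ≤ 1 := by
    rw [norm_smul]; simp [abs_of_nonneg hl0, hl]
  calc _ ≤ ∫⁻ p : E2, (fun z : ℝ × ℝ => (Icc (-R) R).indicator (fun _ => ENNReal.ofReal (2 * R)) z.1
        * ENNReal.ofReal ((1 + z.2 ^ 2)⁻¹)) (p 0, p 1) := by
        apply lintegral_mono
        intro p
        dsimp only
        by_cases hp : pZero p ≤ R
        · have h0 := pZero_sq p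
          have h00 : ‖p‖ ^ 2 = p 0 ^ 2 + p 1 ^ 2 := by
            rw [norm_E2, Real.sq_sqrt (by positivity)]
          have h1 := one_le_pZero p
          have h2 : |p 0| ≤ R := abs_le_of_sq_le_sq (by nlinarith) hR.le
          rw [indicator_of_mem (by exact hp), indicator_of_mem (by exact abs_le.1 h2),
            ← ENNReal.ofReal_mul (by positivity)]
          apply ENNReal.ofReal_le_ofReal
          have hq := q_pos p _ hn
          have hq' := abs_le.1 (abs_inner_le p _ hn)
          have hp' := norm_lt_pZero p
          have hin : ⟪p, l • (EuclideanSpace.single (0 : Fin 2) (1 : ℝ) : E2)⟫ = l * p 0 := by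
            rw [real_inner_smul_right, EuclideanSpace.inner_single_right]; simp
          rw [hin] at hq hq' ⊢
          rw [← div_eq_mul_inv, inv_le_comm₀ hq (by positivity), inv_div, div_le_iff₀ (by positivity)]
          have : (l * p 0) ^ 2 ≤ p 0 ^ 2 := by
            rw [mul_pow]; exact mul_le_of_le_one_left (by positivity) (by nlinarith)
          nlinarith
        · rw [indicator_of_notMem (by exact hp)]; exact zero_le
    _ = ENNReal.ofReal (4 * Real.pi * R ^ 2) := by
        refine (lintegral_E2 (fun z : ℝ × ℝ => (Icc (-R) R).indicator
          (fun _ => ENNReal.ofReal (2 * R)) z.1 * ENNReal.ofReal ((1 + z.2 ^ 2)⁻¹))).trans ?_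
        rw [Measure.volume_eq_prod, lintegral_prod_mul
          (f := (Icc (-R) R).indicator (fun _ => ENNReal.ofReal (2 * R)))
          (g := fun y => ENNReal.ofReal ((1 + y ^ 2)⁻¹))
          ((measurable_const.indicator measurableSet_Icc).aemeasurable) (by fun_prop),
          lintegral_indicator measurableSet_Icc, setLIntegral_const, Real.volume_Icc,
          ← ofReal_integral_eq_lintegral_ofReal integrable_inv_one_add_sq
            (Filter.Eventually.of_forall fun x => by positivity), integral_univ_inv_one_add_sq,
          ← ENNReal.ofReal_mul (by positivity), ← ENNReal.ofReal_mul (by nlinarith)]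
        congr 1; ring

lemma lintegral_low (R : ℝ) (hR : 0 < R) (ξ : E2) (hξ : ‖ξ‖ ≤ 1) :
    ∫⁻ p in {p : E2 | pZero p ≤ R}, ENNReal.ofReal ((pZero p + ⟪p, ξ⟫)⁻¹)
      ≤ ENNReal.ofReal (4 * Real.pi * R ^ 2) := by
  have hS : MeasurableSet {p : E2 | pZero p ≤ R} := measurableSet_le measurable_pZero measurable_const
  rw [← lintegral_indicator hS]
  refine le_trans (le_of_eq ?_) (lintegral_low_e R hR ‖ξ‖ (norm_nonneg _) hξ)
  set w : E2 := ‖ξ‖ • EuclideanSpace.single (0 : Fin 2) (1 : ℝ) with hw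
  have hT : (ℝ ∙ (ξ - w))ᗮ.reflection ξ = w := by
    apply Submodule.reflection_sub
    rw [hw, norm_smul]; simp
  set T := (ℝ ∙ (ξ - w))ᗮ.reflection
  symm
  rw [← (T.measurePreserving).lintegral_comp_emb T.toMeasurableEquiv.measurableEmbedding]
  apply lintegral_congr
  intro p
  have h1 : pZero (T p) = pZero p := by unfold pZero; rw [T.norm_map]
  have h2 : ⟪T p, w⟫ = ⟪p, ξ⟫ := by rw [← hT, T.inner_map_map]
  simp only [indicator, mem_ofPred_eq, h1, h2]

/-- splitting into small and large momenta -/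
lemma split_bound (C₀ : ℝ) (g : E2 → ℝ) (hg : Measurable g) (hg0 : ∀ p, 0 ≤ g p)
    (hgC : ∀ᵐ p, g p ≤ C₀) (hC₀ : 0 < C₀) (ξ : E2) (hξ : ‖ξ‖ ≤ 1) (k : ℕ) (c : ℝ) (hc : 0 ≤ c)
    (hk : ∀ p, (pZero p + ⟪p, ξ⟫)⁻¹ * pZero p ^ 3 ≤ c * pZero p ^ k) (R : ℝ) (hR : 0 < R) :
    ∫⁻ p, ENNReal.ofReal (g p * (pZero p + ⟪p, ξ⟫)⁻¹) ≤
      ENNReal.ofReal (4 * Real.pi * C₀ * R ^ 2) + ENNReal.ofReal ((R ^ 3)⁻¹) *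
        (ENNReal.ofReal c * ∫⁻ p, ENNReal.ofReal (pZero p ^ k * g p)) := by
  have hS : MeasurableSet {p : E2 | pZero p ≤ R} := measurableSet_le measurable_pZero measurable_const
  have hm := measurable_pZero
  rw [← lintegral_add_compl _ hS]
  gcongr ?_ + ?_
  · calc _ ≤ ∫⁻ p in {p : E2 | pZero p ≤ R}, ENNReal.ofReal C₀ *
          ENNReal.ofReal ((pZero p + ⟪p, ξ⟫)⁻¹) := by
          apply lintegral_mono_ae
          filter_upwards [ae_restrict_of_ae hgC] with p hp
          rw [← ENNReal.ofReal_mul hC₀.le]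
          have := inv_pos.2 (q_pos p ξ hξ)
          gcongr
      _ ≤ ENNReal.ofReal C₀ * ENNReal.ofReal (4 * Real.pi * R ^ 2) := by
          rw [lintegral_const_mul _ (by fun_prop)]
          gcongr
          exact lintegral_low R hR ξ hξ
      _ = _ := by rw [← ENNReal.ofReal_mul hC₀.le]; congr 1; ring
  · rw [← lintegral_const_mul _ (by fun_prop), ← lintegral_const_mul _ (by fun_prop)]
    refine le_trans ?_ (setLIntegral_le_lintegral {p : E2 | pZero p ≤ R}ᶜ _)
    apply setLIntegral_mono' hS.compl
    intro p hp
    have hp : R < pZero p := not_le.1 hp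
    rw [← ENNReal.ofReal_mul hc, ← ENNReal.ofReal_mul (by positivity)]
    apply ENNReal.ofReal_le_ofReal
    have h1 := inv_pos.2 (q_pos p ξ hξ)
    have h2 : (pZero p + ⟪p, ξ⟫)⁻¹ ≤ (R ^ 3)⁻¹ * (c * pZero p ^ k) := by
      rw [inv_mul_eq_div, le_div_iff₀ (by positivity)]
      refine le_trans ?_ (hk p)
      gcongr
    calc g p * (pZero p + ⟪p, ξ⟫)⁻¹ ≤ g p * ((R ^ 3)⁻¹ * (c * pZero p ^ k)) := by
          have := hg0 p; gcongr
      _ = _ := by ring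

lemma optimize (A : ℝ) (hA : 0 < A) (I M : ENNReal)
    (h : ∀ R : ℝ, 0 < R → I ≤ ENNReal.ofReal (A * R ^ 2) + ENNReal.ofReal ((R ^ 3)⁻¹) * M) :
    I ≤ ENNReal.ofReal (A + 1) * M ^ ((2 : ℝ) / 5) := by
  rcases eq_or_ne M ⊤ with rfl | hM
  · rw [ENNReal.top_rpow_of_pos (by norm_num), ENNReal.mul_top (by simp; linarith)]; exact le_top
  rcases eq_or_ne M 0 with rfl | hM0
  · have : I ≤ 0 := by
      apply ENNReal.le_of_forall_pos_le_add
      intro e he _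
      have h1 := h (Real.sqrt (e / A)) (by positivity)
      rw [Real.sq_sqrt (by positivity), mul_zero, add_zero, mul_div_cancel₀ _ hA.ne'] at h1
      simpa using h1
    exact this.trans zero_le
  · set m := M.toReal
    have hm : 0 < m := ENNReal.toReal_pos hM0 hM
    have hMm : M = ENNReal.ofReal m := (ENNReal.ofReal_toReal hM).symm
    have h1 := h (m ^ ((1 : ℝ) / 5)) (by positivity)
    rw [hMm, ENNReal.ofReal_rpow_of_pos hm, ← ENNReal.ofReal_mul (by positivity)]
    rw [hMm, ← ENNReal.ofReal_mul (by positivity), ← ENNReal.ofReal_add (by positivity) (by positivity)] at h1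
    refine h1.trans (le_of_eq ?_)
    congr 1
    rw [add_mul, one_mul, ← Real.rpow_natCast, ← Real.rpow_natCast, ← Real.rpow_mul hm.le,
      ← Real.rpow_mul hm.le, ← Real.rpow_neg hm.le]
    congr 1
    · congr 2; norm_num
    · nth_rewrite 2 [← Real.rpow_one m]
      rw [← Real.rpow_add hm]; norm_num

lemma pointwise4 (C₀ : ℝ) (g : E2 → ℝ) (hg : Measurable g) (hg0 : ∀ p, 0 ≤ g p)
    (hgC : ∀ᵐ p, g p ≤ C₀) (hC₀ : 0 < C₀) (ξ : E2) (hξ : ‖ξ‖ ≤ 1) :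
    ∫⁻ p, ENNReal.ofReal (g p * (pZero p + ⟪p, ξ⟫)⁻¹) ≤ ENNReal.ofReal (4 * Real.pi * C₀ + 1) *
      (ENNReal.ofReal 2 * ∫⁻ p, ENNReal.ofReal (pZero p ^ 4 * g p)) ^ ((2 : ℝ) / 5) := by
  apply optimize _ (by positivity)
  refine split_bound C₀ g hg hg0 hgC hC₀ ξ hξ 4 2 (by norm_num) ?_
  intro p
  have := inv_q_le p ξ hξ
  have h1 := one_le_pZero p
  calc _ ≤ (2 * pZero p) * pZero p ^ 3 := by gcongr
    _ = _ := by ring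

lemma pointwise2 (C₀ : ℝ) (g : E2 → ℝ) (hg : Measurable g) (hg0 : ∀ p, 0 ≤ g p)
    (hgC : ∀ᵐ p, g p ≤ C₀) (hC₀ : 0 < C₀) (ξ : E2) (hξ : ‖ξ‖ < 1) :
    ∫⁻ p, ENNReal.ofReal (g p * (pZero p + ⟪p, ξ⟫)⁻¹) ≤ ENNReal.ofReal (4 * Real.pi * C₀ + 1) *
      (ENNReal.ofReal ((1 - ‖ξ‖)⁻¹) * ∫⁻ p, ENNReal.ofReal (pZero p ^ 2 * g p)) ^ ((2 : ℝ) / 5) := by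
  apply optimize _ (by positivity)
  have h6 : 0 < 1 - ‖ξ‖ := by linarith
  refine split_bound C₀ g hg hg0 hgC hC₀ ξ hξ.le 2 _ (by positivity) ?_
  intro p
  have h1 := one_le_pZero p
  have h2 := norm_lt_pZero p
  have h3 := (abs_le.1 (abs_real_inner_le_norm p ξ)).1
  have h4 : pZero p * (1 - ‖ξ‖) ≤ pZero p + ⟪p, ξ⟫ := by nlinarith [norm_nonneg ξ]
  calc _ ≤ (pZero p * (1 - ‖ξ‖))⁻¹ * pZero p ^ 3 := by gcongr
    _ = _ := by field_simp

end KT2d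

namespace KT2d

lemma radial_weight (τ : ℝ) (hτ : 0 < τ) (x : E2) (H : ℝ → ENNReal) (hH : Measurable H) :
    ∫⁻ y, {y | dist y x < τ}.indicator
      (fun y => ENNReal.ofReal ((Real.sqrt (τ ^ 2 - dist y x ^ 2))⁻¹) * H (τ - dist y x)) y ≤
    ENNReal.ofReal (2 * Real.pi) *
      ∫⁻ v in Ioo 0 τ, ENNReal.ofReal (Real.sqrt τ * v ^ (-(1 / 2) : ℝ)) * H v := by
  set F : ℝ → ENNReal := (Iio τ).indicator
    (fun r => ENNReal.ofReal ((Real.sqrt (τ ^ 2 - r ^ 2))⁻¹) * H (τ - r)) with hF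
  have hFm : Measurable F := by
    apply Measurable.indicator _ measurableSet_Iio
    fun_prop
  have h1 : ∀ y : E2, {y | dist y x < τ}.indicator
      (fun y => ENNReal.ofReal ((Real.sqrt (τ ^ 2 - dist y x ^ 2))⁻¹) * H (τ - dist y x)) y
      = F ‖y - x‖ := by
    intro y
    simp only [hF, indicator, mem_ofPred_eq, mem_Iio, dist_eq_norm]
  simp_rw [h1]
  rw [lintegral_sub_right_eq_self (fun y : E2 => F ‖y‖) x, lintegral_radial F hFm]
  refine mul_le_mul' le_rfl ?_
  rw [← lintegral_indicator measurableSet_Ioi, ← lintegral_indicator measurableSet_Ioo,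
    ← lintegral_sub_left_eq_self _ τ]
  apply lintegral_mono
  intro v
  dsimp only
  by_cases hv0 : 0 < v
  · by_cases hv : v < τ
    · rw [indicator_of_mem (by simpa using hv), indicator_of_mem (by exact ⟨hv0, hv⟩), hF,
        indicator_of_mem (by simpa using hv0), sub_sub_cancel, ← mul_assoc,
        ← ENNReal.ofReal_mul (by linarith)]
      refine mul_le_mul' (ENNReal.ofReal_le_ofReal ?_) le_rfl
      rw [Real.rpow_neg hv0.le, ← Real.sqrt_eq_rpow, ← div_eq_mul_inv, ← div_eq_mul_inv]
      have h2 : τ ^ 2 - (τ - v) ^ 2 = v * (2 * τ - v) := by ring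
      rw [h2, Real.sqrt_mul hv0.le, div_le_div_iff₀
        (mul_pos (Real.sqrt_pos.2 hv0) (Real.sqrt_pos.2 (by linarith))) (Real.sqrt_pos.2 hv0)]
      have h3 : τ - v ≤ Real.sqrt τ * Real.sqrt (2 * τ - v) := by
        rw [← Real.sqrt_mul hτ.le]
        apply Real.le_sqrt_of_sq_le
        nlinarith
      nlinarith [Real.sqrt_nonneg v]
    · rw [indicator_of_notMem (by simpa using hv)]; exact zero_le
  · have : F (τ - v) = 0 := by
      rw [hF, indicator_of_notMem (by simpa using hv0)]
    simp only [indicator, this, mul_zero, ite_self]; exact zero_le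

/-- integral of a power over `(0,b)` -/
lemma lintegral_pow_low (r b : ℝ) (hr : -1 < r) (hb : 0 < b) :
    ∫⁻ v in Ioc 0 b, ENNReal.ofReal (v ^ r) = ENNReal.ofReal (b ^ (r + 1) / (r + 1)) := by
  have h := intervalIntegral.intervalIntegrable_rpow' (a := 0) (b := b) hr
  rw [intervalIntegrable_iff_integrableOn_Ioc_of_le hb.le] at h
  rw [← ofReal_integral_eq_lintegral_ofReal h, ← intervalIntegral.integral_of_le hb.le,
    integral_rpow (Or.inl hr), Real.zero_rpow (by linarith), sub_zero]
  filter_upwards [ae_restrict_mem measurableSet_Ioc] with v hv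
  exact Real.rpow_nonneg hv.1.le _

lemma lintegral_pow_high (r b : ℝ) (hr : r < -1) (hb : 0 < b) :
    ∫⁻ v in Ioi b, ENNReal.ofReal (v ^ r) = ENNReal.ofReal (-b ^ (r + 1) / (r + 1)) := by
  rw [← ofReal_integral_eq_lintegral_ofReal (integrableOn_Ioi_rpow_of_lt hr hb),
    integral_Ioi_rpow_of_lt hr hb]
  filter_upwards [ae_restrict_mem measurableSet_Ioi] with v hv
  exact Real.rpow_nonneg (hb.le.trans (le_of_lt hv)) _

/-- cut-off near the light cone -/
noncomputable def H4 (ε τ v : ℝ) : ENNReal := if v ≤ ε * τ then 1 else 0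

/-- weight away from the light cone -/
noncomputable def H2 (ε τ v : ℝ) : ENNReal :=
  if v ≤ ε * τ then 0 else ENNReal.ofReal ((v / τ) ^ (-(2 / 3) : ℝ))

lemma H4_int (ε τ : ℝ) (hε : 0 < ε) (hτ : 0 < τ) :
    ∫⁻ v in Ioo 0 τ, ENNReal.ofReal (Real.sqrt τ * v ^ (-(1 / 2) : ℝ)) * H4 ε τ v ≤
      ENNReal.ofReal (2 * ε ^ ((1 : ℝ) / 2) * τ) := by
  calc _ ≤ ∫⁻ v in Ioc 0 (ε * τ), ENNReal.ofReal (Real.sqrt τ) *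
        ENNReal.ofReal (v ^ (-(1 / 2) : ℝ)) := by
        rw [← lintegral_indicator measurableSet_Ioo, ← lintegral_indicator measurableSet_Ioc]
        apply lintegral_mono
        intro v
        simp only [indicator, H4, mem_Ioo, mem_Ioc]
        by_cases h1 : 0 < v <;> by_cases h2 : v ≤ ε * τ <;> by_cases h3 : v < τ <;>
          simp [h1, h2, h3, ENNReal.ofReal_mul (Real.sqrt_nonneg τ)]
    _ = _ := by
        rw [lintegral_const_mul _ (by fun_prop), lintegral_pow_low _ _ (by norm_num) (by positivity),
          ← ENNReal.ofReal_mul (by positivity)]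
        congr 1
        rw [Real.mul_rpow hε.le hτ.le, Real.sqrt_eq_rpow]
        have : τ ^ ((1 : ℝ) / 2) * τ ^ ((1 : ℝ) / 2) = τ := by
          rw [← Real.rpow_add hτ]; norm_num
        norm_num at this ⊢
        linear_combination (2 * ε ^ ((1 : ℝ) / 2)) * this

lemma H2_int (ε τ : ℝ) (hε : 0 < ε) (hτ : 0 < τ) :
    ∫⁻ v in Ioo 0 τ, ENNReal.ofReal (Real.sqrt τ * v ^ (-(1 / 2) : ℝ)) * H2 ε τ v ≤
      ENNReal.ofReal (6 * ε ^ (-(1 / 6) : ℝ) * τ) := by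
  calc _ ≤ ∫⁻ v in Ioi (ε * τ), ENNReal.ofReal (τ ^ ((7 : ℝ) / 6)) *
        ENNReal.ofReal (v ^ (-(7 / 6) : ℝ)) := by
        rw [← lintegral_indicator measurableSet_Ioo, ← lintegral_indicator measurableSet_Ioi]
        apply lintegral_mono
        intro v
        simp only [indicator, H2, mem_Ioo, mem_Ioi]
        by_cases h2 : v ≤ ε * τ
        · simp [h2]
        · have h2' := not_le.1 h2
          have h1 : 0 < v := lt_trans (by positivity) h2'
          rw [if_neg h2, if_pos h2', ← ENNReal.ofReal_mul (by positivity),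
            ← ENNReal.ofReal_mul (by positivity)]
          split_ifs
          · apply le_of_eq
            congr 1
            rw [Real.div_rpow h1.le hτ.le, Real.sqrt_eq_rpow, div_eq_mul_inv (v ^ _),
              ← Real.rpow_neg hτ.le]
            have e1 : τ ^ ((7 : ℝ) / 6) = τ ^ ((1 : ℝ) / 2) * τ ^ (-(-(2 / 3)) : ℝ) := by
              rw [← Real.rpow_add hτ]; norm_num
            have e2 : v ^ (-(7 / 6) : ℝ) = v ^ (-(1 / 2) : ℝ) * v ^ (-(2 / 3) : ℝ) := by
              rw [← Real.rpow_add h1]; norm_num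
            rw [e1, e2]; ring
          · exact zero_le
    _ = _ := by
        rw [lintegral_const_mul _ (by fun_prop), lintegral_pow_high _ _ (by norm_num) (by positivity),
          ← ENNReal.ofReal_mul (by positivity)]
        congr 1
        rw [Real.mul_rpow hε.le hτ.le]
        have : τ ^ ((7 : ℝ) / 6) * τ ^ (-(7 / 6) + 1 : ℝ) = τ := by
          rw [← Real.rpow_add hτ]; norm_num
        norm_num at this ⊢
        linear_combination (6 * ε ^ (-(1 / 6) : ℝ)) * this

/-- the truncated light cone -/
def cone (t : ℝ) (x : E2) : Set (ℝ × E2) := {z | 0 < z.1 ∧ dist z.2 x < t - z.1}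

lemma cone_meas (t : ℝ) (x : E2) : MeasurableSet (cone t x) := by
  have h1 : MeasurableSet {z : ℝ × E2 | 0 < z.1} := measurableSet_lt measurable_const measurable_fst
  have h2 : MeasurableSet {z : ℝ × E2 | dist z.2 x < t - z.1} :=
    measurableSet_lt (by fun_prop) (by fun_prop)
  exact h1.inter h2

noncomputable def W (t : ℝ) (x : E2) (z : ℝ × E2) : ENNReal :=
  ENNReal.ofReal ((Real.sqrt ((t - z.1) ^ 2 - dist z.2 x ^ 2))⁻¹)

lemma W_meas (t : ℝ) (x : E2) : Measurable (W t x) := by unfold W; fun_prop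

lemma weight_int (t : ℝ) (ht : 0 < t) (x : E2) (H : ℝ → ℝ → ENNReal)
    (hH : Measurable (fun z : ℝ × ℝ => H z.1 z.2)) (c : ℝ) (hc : 0 ≤ c)
    (hb : ∀ τ, 0 < τ → ∫⁻ v in Ioo 0 τ, ENNReal.ofReal (Real.sqrt τ * v ^ (-(1 / 2) : ℝ)) * H τ v ≤
      ENNReal.ofReal (c * τ)) :
    ∫⁻ z in cone t x, W t x z * ENNReal.ofReal ((t - z.1) ^ (-(5 / 3) : ℝ)) *
      H (t - z.1) (t - z.1 - dist z.2 x) ≤ ENNReal.ofReal (6 * Real.pi * c * t ^ ((1 : ℝ) / 3)) := by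
  have hHm : Measurable (fun z : ℝ × E2 => H (t - z.1) (t - z.1 - dist z.2 x)) :=
    hH.comp (f := fun z : ℝ × E2 => (t - z.1, t - z.1 - dist z.2 x)) (by fun_prop)
  have hW := W_meas t x
  rw [← lintegral_indicator (cone_meas t x), Measure.volume_eq_prod, lintegral_prod _
    ((Measurable.indicator (by fun_prop) (cone_meas t x)).aemeasurable)]
  calc _ ≤ ∫⁻ s, (Ico 0 t).indicator (fun s => ENNReal.ofReal (2 * Real.pi * c) *
          ENNReal.ofReal ((t - s) ^ (-(2 / 3) : ℝ))) s := by
        apply lintegral_mono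
        intro s
        dsimp only
        by_cases hs : 0 < s ∧ s < t
        · have hτ : 0 < t - s := by linarith [hs.2]
          rw [indicator_of_mem (by exact ⟨hs.1.le, hs.2⟩)]
          set G : E2 → ENNReal := {y | dist y x < t - s}.indicator
            (fun y => ENNReal.ofReal ((Real.sqrt ((t - s) ^ 2 - dist y x ^ 2))⁻¹) *
              H (t - s) (t - s - dist y x)) with hG
          calc _ = ∫⁻ y, ENNReal.ofReal ((t - s) ^ (-(5 / 3) : ℝ)) * G y := by
                apply lintegral_congr
                intro y
                simp only [hG, indicator, cone, mem_ofPred_eq, hs.1, true_and, W]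
                split_ifs
                · ring
                · simp
            _ = ENNReal.ofReal ((t - s) ^ (-(5 / 3) : ℝ)) * ∫⁻ y, G y := lintegral_const_mul' _ _ ENNReal.ofReal_ne_top
            _ ≤ ENNReal.ofReal ((t - s) ^ (-(5 / 3) : ℝ)) * (ENNReal.ofReal (2 * Real.pi) *
                  ENNReal.ofReal (c * (t - s))) := by
                gcongr
                refine (radial_weight (t - s) hτ x (H (t - s))
                  (hH.comp (by fun_prop : Measurable fun v : ℝ => (t - s, v)))).trans ?_
                gcongr
                exact hb _ hτ
            _ = _ := by
                rw [← ENNReal.ofReal_mul (by positivity), ← ENNReal.ofReal_mul (by positivity),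
                  ← ENNReal.ofReal_mul (by positivity)]
                congr 1
                have : (t - s) ^ (-(2 / 3) : ℝ) = (t - s) ^ (-(5 / 3) : ℝ) * (t - s) := by
                  nth_rewrite 3 [← Real.rpow_one (t - s)]
                  rw [← Real.rpow_add hτ]; norm_num
                rw [this]; ring
        · refine le_trans (le_of_eq ?_) zero_le
          rw [lintegral_eq_zero_iff' ?_]
          · filter_upwards with y
            apply indicator_of_notMem
            intro hy
            have h1 : 0 < s := hy.1
            have h2 : dist y x < t - s := hy.2
            exact hs ⟨h1, by linarith [dist_nonneg (x := y) (y := x)]⟩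
          · exact ((Measurable.indicator (by fun_prop) (cone_meas t x)).comp
              (by fun_prop : Measurable fun y : E2 => (s, y))).aemeasurable
    _ = ∫⁻ s, (Ioc 0 t).indicator (fun s => ENNReal.ofReal (2 * Real.pi * c) *
          ENNReal.ofReal (s ^ (-(2 / 3) : ℝ))) s := by
        rw [← lintegral_sub_left_eq_self (fun s => (Ioc 0 t).indicator _ s) t]
        apply lintegral_congr
        intro s
        simp only [indicator, mem_Ico, mem_Ioc]
        congr 1
        simp only [sub_pos, eq_iff_iff]
        constructor <;> rintro ⟨h1, h2⟩ <;> constructor <;> linarith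
    _ = _ := by
        rw [lintegral_indicator measurableSet_Ioc, lintegral_const_mul _ (by fun_prop),
          lintegral_pow_low _ _ (by norm_num) ht, ← ENNReal.ofReal_mul (by positivity)]
        congr 1
        norm_num
        ring

end KT2d

namespace KT2d

lemma H4_meas (ε : ℝ) : Measurable (fun z : ℝ × ℝ => H4 ε z.1 z.2) := by
  unfold H4
  exact Measurable.ite (measurableSet_le (by fun_prop) (by fun_prop)) (by fun_prop) (by fun_prop)

lemma H2_meas (ε : ℝ) : Measurable (fun z : ℝ × ℝ => H2 ε z.1 z.2) := by
  unfold H2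
  exact Measurable.ite (measurableSet_le (by fun_prop) (by fun_prop)) (by fun_prop) (by fun_prop)

noncomputable def V (H : ℝ → ℝ → ENNReal) (t : ℝ) (x : E2) (z : ℝ × E2) : ENNReal :=
  W t x z * ENNReal.ofReal ((t - z.1) ^ (-(5 / 3) : ℝ)) * H (t - z.1) (t - z.1 - dist z.2 x)

lemma V_meas (H : ℝ → ℝ → ENNReal) (hH : Measurable (fun z : ℝ × ℝ => H z.1 z.2)) (t : ℝ) (x : E2) :
    Measurable (V H t x) := by
  have hHm : Measurable (fun z : ℝ × E2 => H (t - z.1) (t - z.1 - dist z.2 x)) :=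
    hH.comp (f := fun z : ℝ × E2 => (t - z.1, t - z.1 - dist z.2 x)) (by fun_prop)
  have hW := W_meas t x
  unfold V; fun_prop

lemma recombine (w ρ H : ENNReal) (τ : ℝ) (hτ : 0 < τ) :
    w * ENNReal.ofReal τ⁻¹ * (H ^ ((3 : ℝ) / 5) * ρ ^ ((2 : ℝ) / 5)) =
    (ρ * w) ^ ((2 : ℝ) / 5) * (w * ENNReal.ofReal (τ ^ (-(5 / 3) : ℝ)) * H) ^ ((3 : ℝ) / 5) := by
  rw [ENNReal.mul_rpow_of_nonneg _ _ (by norm_num), ENNReal.mul_rpow_of_nonneg _ _ (by norm_num),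
    ENNReal.mul_rpow_of_nonneg _ _ (by norm_num), ENNReal.ofReal_rpow_of_pos (by positivity),
    ← Real.rpow_mul hτ.le]
  have h1 : w = w ^ ((2 : ℝ) / 5) * w ^ ((3 : ℝ) / 5) := by
    rw [← ENNReal.rpow_add_of_nonneg _ _ (by norm_num) (by norm_num)]; norm_num
  have h2 : τ ^ (-(5 / 3) * (3 / 5) : ℝ) = τ⁻¹ := by
    rw [← Real.rpow_neg_one]; norm_num
  rw [h2]
  nth_rewrite 1 [h1]
  ring

lemma cone_le (t : ℝ) (x : E2) (F : ℝ × E2 → ENNReal) (hF : Measurable F)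
    (G : ℝ → E2 → ENNReal) (h : ∀ z ∈ cone t x, F z ≤ G z.1 z.2) :
    ∫⁻ z in cone t x, F z ≤ ∫⁻ s in Ioc (0 : ℝ) t, ∫⁻ y in {y | dist y x ≤ t - s}, G s y := by
  rw [← lintegral_indicator (cone_meas t x), Measure.volume_eq_prod, lintegral_prod _
    ((hF.indicator (cone_meas t x)).aemeasurable), ← lintegral_indicator measurableSet_Ioc]
  apply lintegral_mono
  intro s
  dsimp only
  have hS : MeasurableSet {y : E2 | dist y x ≤ t - s} := measurableSet_le (by fun_prop) (by fun_prop)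
  rw [indicator, ← lintegral_indicator hS]
  split_ifs with hs
  · apply lintegral_mono
    intro y
    dsimp only
    by_cases hy : (s, y) ∈ cone t x
    · have h2 : dist y x < t - s := hy.2
      rw [indicator_of_mem hy, indicator_of_mem (by exact h2.le)]
      exact h _ hy
    · rw [indicator_of_notMem hy]; exact zero_le
  · refine le_trans (lintegral_mono (g := fun _ => 0) ?_) (by simp)
    intro y
    dsimp only
    rw [indicator_of_notMem]
    intro hy
    have h1 : 0 < s := hy.1
    have h2 : dist y x < t - s := hy.2
    exact hs ⟨h1, by linarith [dist_nonneg (x := y) (y := x)]⟩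

lemma le_cone (t : ℝ) (x : E2) (F : ℝ × E2 → ENNReal) (hF : Measurable F)
    (G : ℝ → E2 → ENNReal) (h : ∀ᵐ s, ∀ᵐ y, (s, y) ∈ cone t x → G s y ≤ F (s, y))
    (h0 : ∀ s y, dist y x = t - s → G s y = 0) :
    ∫⁻ s in Ioc (0 : ℝ) t, ∫⁻ y in {y | dist y x ≤ t - s}, G s y ≤ ∫⁻ z in cone t x, F z := by
  rw [← lintegral_indicator (cone_meas t x), Measure.volume_eq_prod, lintegral_prod _
    ((hF.indicator (cone_meas t x)).aemeasurable), ← lintegral_indicator measurableSet_Ioc]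
  apply lintegral_mono_ae
  filter_upwards [h] with s h
  have hS : MeasurableSet {y : E2 | dist y x ≤ t - s} := measurableSet_le (by fun_prop) (by fun_prop)
  rw [indicator, ← lintegral_indicator hS]
  split_ifs with hs
  · apply lintegral_mono_ae
    filter_upwards [h] with y h
    rw [indicator]
    split_ifs with hy
    · rcases lt_or_eq_of_le (show dist y x ≤ t - s from hy) with hy | hy
      · have hc : (s, y) ∈ cone t x := ⟨hs.1, hy⟩
        rw [indicator_of_mem hc]; exact h hc
      · rw [h0 s y hy]; exact zero_le
    · exact zero_le
  · exact zero_le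

lemma holder_cone (t : ℝ) (ht : 0 < t) (x : E2) (ρ : ℝ × E2 → ENNReal) (hρ : Measurable ρ)
    (H : ℝ → ℝ → ENNReal) (hH : Measurable (fun z : ℝ × ℝ => H z.1 z.2)) (c : ℝ) (hc : 0 < c)
    (hb : ∀ τ, 0 < τ → ∫⁻ v in Ioo 0 τ, ENNReal.ofReal (Real.sqrt τ * v ^ (-(1 / 2) : ℝ)) * H τ v ≤
      ENNReal.ofReal (c * τ)) :
    ∫⁻ z in cone t x, (ρ z * W t x z) ^ ((2 : ℝ) / 5) * (V H t x z) ^ ((3 : ℝ) / 5) ≤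
      (∫⁻ s in Ioc (0 : ℝ) t, ∫⁻ y in {y | dist y x ≤ t - s},
        ρ (s, y) / ENNReal.ofReal (Real.sqrt ((t - s) ^ 2 - dist y x ^ 2))) ^ ((2 : ℝ) / 5) *
      (ENNReal.ofReal ((6 * Real.pi * c) ^ ((3 : ℝ) / 5)) * ENNReal.ofReal (1 + t)) := by
  have hW := W_meas t x
  have hV := V_meas H hH t x
  refine (ENNReal.lintegral_mul_norm_pow_le (p := (2 : ℝ) / 5) (q := (3 : ℝ) / 5)
    (f := fun z => ρ z * W t x z) (g := V H t x)
    (by fun_prop) (by fun_prop) (by norm_num) (by norm_num) (by norm_num)).trans ?_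
  gcongr ?_ ^ _ * ?_
  · apply cone_le t x _ (by fun_prop)
    rintro ⟨s, y⟩ hz
    have h2 : dist y x < t - s := hz.2
    have h3 : 0 < (t - s) ^ 2 - dist y x ^ 2 := by nlinarith [dist_nonneg (x := y) (y := x)]
    dsimp only [W]
    rw [ENNReal.ofReal_inv_of_pos (Real.sqrt_pos.2 h3), div_eq_mul_inv]
  · calc _ ≤ (ENNReal.ofReal (6 * Real.pi * c * t ^ ((1 : ℝ) / 3))) ^ ((3 : ℝ) / 5) := by
          gcongr
          exact weight_int t ht x H hH c hc.le hb
      _ = ENNReal.ofReal ((6 * Real.pi * c) ^ ((3 : ℝ) / 5)) * ENNReal.ofReal (t ^ ((1 : ℝ) / 5)) := by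
          rw [ENNReal.ofReal_rpow_of_pos (by positivity), Real.mul_rpow (by positivity) (by positivity),
            ENNReal.ofReal_mul (by positivity), ← Real.rpow_mul ht.le]
          norm_num
      _ ≤ _ := by
          gcongr
          calc t ^ ((1 : ℝ) / 5) ≤ (1 + t) ^ ((1 : ℝ) / 5) := by gcongr; linarith
            _ ≤ (1 + t) ^ (1 : ℝ) := by
              apply Real.rpow_le_rpow_of_exponent_le (by linarith) (by norm_num)
            _ = 1 + t := Real.rpow_one _

/-- pointwise bound inside the cone -/
lemma inner_bound (C₀ : ℝ) (hC₀ : 0 < C₀) (t : ℝ) (x : E2) (s : ℝ) (y : E2)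
    (hz : (s, y) ∈ cone t x) (g : E2 → ℝ) (hg : Measurable g) (hg0 : ∀ p, 0 ≤ g p)
    (hgC : ∀ᵐ p, g p ≤ C₀) (ε : ℝ) (hε : 0 < ε) :
    ∫⁻ p, ENNReal.ofReal (g p / (pZero p * (1 + ⟪pHat p, (t - s)⁻¹ • (y - x)⟫)
                  * (t - s) * Real.sqrt ((t - s) ^ 2 - dist y x ^ 2))) ≤
    ENNReal.ofReal (2 * (4 * Real.pi * C₀ + 1)) *
      (((∫⁻ p, ENNReal.ofReal (pZero p ^ 2 * g p)) * W t x (s, y)) ^ ((2 : ℝ) / 5) *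
          (V (H2 ε) t x (s, y)) ^ ((3 : ℝ) / 5) +
       ((∫⁻ p, ENNReal.ofReal (pZero p ^ 4 * g p)) * W t x (s, y)) ^ ((2 : ℝ) / 5) *
          (V (H4 ε) t x (s, y)) ^ ((3 : ℝ) / 5)) := by
  have h2 : dist y x < t - s := hz.2
  have hd := dist_nonneg (x := y) (y := x)
  have hτ : 0 < t - s := by linarith
  have h3 : 0 < (t - s) ^ 2 - dist y x ^ 2 := by nlinarith
  have h4 := Real.sqrt_pos.2 h3
  set ξ : E2 := (t - s)⁻¹ • (y - x) with hξdef
  have hξn : ‖ξ‖ = dist y x / (t - s) := by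
    rw [hξdef, norm_smul, dist_eq_norm, Real.norm_of_nonneg (by positivity), inv_mul_eq_div]
  have hξ : ‖ξ‖ < 1 := by rw [hξn, div_lt_one hτ]; exact h2
  have hm := measurable_pZero
  have e1 : ∫⁻ p, ENNReal.ofReal (g p / (pZero p * (1 + ⟪pHat p, ξ⟫)
                  * (t - s) * Real.sqrt ((t - s) ^ 2 - dist y x ^ 2))) =
      W t x (s, y) * ENNReal.ofReal (t - s)⁻¹ *
        ∫⁻ p, ENNReal.ofReal (g p * (pZero p + ⟪p, ξ⟫)⁻¹) := by
    rw [W, ← ENNReal.ofReal_mul (by positivity), ← lintegral_const_mul _ (by fun_prop)]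
    apply lintegral_congr
    intro p
    rw [← ENNReal.ofReal_mul (by positivity), pZero_mul]
    congr 1
    have := q_pos p ξ hξ.le
    field_simp
  rw [e1]
  simp only [V]
  rw [← recombine _ _ _ _ hτ, ← recombine _ _ _ _ hτ, ← mul_add]
  have e2 : ENNReal.ofReal (2 * (4 * Real.pi * C₀ + 1)) =
      ENNReal.ofReal (4 * Real.pi * C₀ + 1) * ENNReal.ofReal 2 := by
    rw [← ENNReal.ofReal_mul (by positivity)]; congr 1; ring
  rw [mul_left_comm]
  gcongr
  rw [e2]
  by_cases hv : t - s - dist y x ≤ ε * (t - s)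
  · simp only [H4, H2, hv, if_true, ENNReal.one_rpow, one_mul]
    rw [ENNReal.zero_rpow_of_pos (by norm_num), zero_mul, zero_add]
    refine (pointwise4 C₀ g hg hg0 hgC hC₀ ξ hξ.le).trans ?_
    rw [ENNReal.mul_rpow_of_nonneg _ _ (by norm_num), mul_assoc (ENNReal.ofReal _)]
    refine mul_le_mul' le_rfl (mul_le_mul' ?_ le_rfl)
    calc ENNReal.ofReal 2 ^ ((2 : ℝ) / 5) ≤ ENNReal.ofReal 2 ^ (1 : ℝ) := by
          apply ENNReal.rpow_le_rpow_of_exponent_le _ (by norm_num)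
          simp
      _ = _ := ENNReal.rpow_one _
  · simp only [H4, H2, hv, if_false]
    rw [ENNReal.zero_rpow_of_pos (by norm_num), zero_mul, add_zero]
    refine (pointwise2 C₀ g hg hg0 hgC hC₀ ξ hξ).trans ?_
    have hδ : 1 - ‖ξ‖ = (t - s - dist y x) / (t - s) := by rw [hξn]; field_simp
    have hδ0 : 0 < (t - s - dist y x) / (t - s) := div_pos (by linarith) hτ
    rw [ENNReal.mul_rpow_of_nonneg _ _ (by norm_num), hδ]
    refine mul_le_mul' (le_mul_of_one_le_right zero_le (by simp)) (mul_le_mul' (le_of_eq ?_) le_rfl)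
    rw [ENNReal.ofReal_rpow_of_pos (by positivity), ENNReal.ofReal_rpow_of_pos (by positivity),
      ← Real.rpow_mul hδ0.le, ← Real.rpow_neg_one, ← Real.rpow_mul hδ0.le]
    norm_num

end KT2d

/-- **Estimate for the Glassey–Schaeffer term `K_T` in two dimensions**
(Proposition 5.3).  For `f : [0,t]×ℝ²×ℝ² → [0,∞)` measurable with `f ≤ C₀` a.e.,
there is `C = C(C₀)` such that for every `ε ∈ (0,1]`, with `ξ = (y−x)/(t−s)`,
`∫₀ᵗ∫_{|y−x|≤t−s}∫ f/(p₀(1+p̂·ξ)(t−s)√((t−s)²−|y−x|²)) dp dy ds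
 ≤ C(1+t)[ε^{−1/10}(∫₀ᵗ∫ (∫p₀²f dp)/√(...))^{2/5} + ε^{3/10}(∫₀ᵗ∫ (∫p₀⁴f dp)/√(...))^{2/5}]`. -/
theorem KT_estimate_2d (C₀ : ℝ) (hC₀ : 0 < C₀) :
    ∃ C : ℝ≥0, 0 < C ∧
      ∀ (t : ℝ), 0 < t → ∀ (x : EuclideanSpace ℝ (Fin 2)),
      ∀ (f : ℝ → EuclideanSpace ℝ (Fin 2) → EuclideanSpace ℝ (Fin 2) → ℝ),
        Measurable (fun z : ℝ × EuclideanSpace ℝ (Fin 2) × EuclideanSpace ℝ (Fin 2) =>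
          f z.1 z.2.1 z.2.2) →
        (∀ s y p, 0 ≤ f s y p) →
        (∀ᵐ z : ℝ × EuclideanSpace ℝ (Fin 2) × EuclideanSpace ℝ (Fin 2),
          f z.1 z.2.1 z.2.2 ≤ C₀) →
        ∀ ε : ℝ, 0 < ε → ε ≤ 1 →
          (∫⁻ s in Ioc (0 : ℝ) t, ∫⁻ y in {y | dist y x ≤ t - s},
              ∫⁻ p, ENNReal.ofReal (f s y p /
                (pZero p * (1 + ⟪pHat p, (t - s)⁻¹ • (y - x)⟫)
                  * (t - s) * Real.sqrt ((t - s) ^ 2 - dist y x ^ 2))))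
            ≤ C * ENNReal.ofReal (1 + t) *
              (ENNReal.ofReal ε ^ (-(1 / 10) : ℝ) *
                (∫⁻ s in Ioc (0 : ℝ) t, ∫⁻ y in {y | dist y x ≤ t - s},
                  (∫⁻ p, ENNReal.ofReal (pZero p ^ 2 * f s y p))
                    / ENNReal.ofReal (Real.sqrt ((t - s) ^ 2 - dist y x ^ 2)))
                      ^ ((2 : ℝ) / 5)
              + ENNReal.ofReal ε ^ ((3 : ℝ) / 10) *
                (∫⁻ s in Ioc (0 : ℝ) t, ∫⁻ y in {y | dist y x ≤ t - s},
                  (∫⁻ p, ENNReal.ofReal (pZero p ^ 4 * f s y p))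
                    / ENNReal.ofReal (Real.sqrt ((t - s) ^ 2 - dist y x ^ 2)))
                      ^ ((2 : ℝ) / 5)) := by
  set K : ℝ := 2 * (4 * Real.pi * C₀ + 1) with hK
  have hKpos : 0 < K := by positivity
  set c : ℝ := (36 * Real.pi) ^ ((3 : ℝ) / 5) with hc
  have hcpos : 0 < c := by positivity
  refine ⟨(K * c).toNNReal, by rw [Real.toNNReal_pos]; positivity, ?_⟩
  intro t ht x f hf hf0 hfC ε hε hε1
  have hm := KT2d.measurable_pZero
  have hW := KT2d.W_meas t x
  have hV2 := KT2d.V_meas _ (KT2d.H2_meas ε) t x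
  have hV4 := KT2d.V_meas _ (KT2d.H4_meas ε) t x
  have hρ : ∀ k : ℕ, Measurable (fun z : ℝ × EuclideanSpace ℝ (Fin 2) =>
      ∫⁻ p, ENNReal.ofReal (pZero p ^ k * f z.1 z.2 p)) := by
    intro k
    have h1 : Measurable (fun w : (ℝ × EuclideanSpace ℝ (Fin 2)) × EuclideanSpace ℝ (Fin 2) =>
        f w.1.1 w.1.2 w.2) :=
      hf.comp (by fun_prop : Measurable
        (fun w : (ℝ × EuclideanSpace ℝ (Fin 2)) × EuclideanSpace ℝ (Fin 2) => (w.1.1, w.1.2, w.2)))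
    exact Measurable.lintegral_prod_right' (f := fun w : (ℝ × EuclideanSpace ℝ (Fin 2)) ×
      EuclideanSpace ℝ (Fin 2) => ENNReal.ofReal (pZero w.2 ^ k * f w.1.1 w.1.2 w.2)) (by fun_prop)
  have hρ2 := hρ 2
  have hρ4 := hρ 4
  have hae : ∀ᵐ s : ℝ, ∀ᵐ y : EuclideanSpace ℝ (Fin 2), ∀ᵐ p, f s y p ≤ C₀ := by
    rw [Measure.volume_eq_prod] at hfC
    filter_upwards [Measure.ae_ae_of_ae_prod hfC] with s hs
    rw [Measure.volume_eq_prod] at hs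
    exact Measure.ae_ae_of_ae_prod hs
  refine (KT2d.le_cone t x (fun z => ENNReal.ofReal K *
      (((∫⁻ p, ENNReal.ofReal (pZero p ^ 2 * f z.1 z.2 p)) * KT2d.W t x z) ^ ((2 : ℝ) / 5) *
          (KT2d.V (KT2d.H2 ε) t x z) ^ ((3 : ℝ) / 5) +
       ((∫⁻ p, ENNReal.ofReal (pZero p ^ 4 * f z.1 z.2 p)) * KT2d.W t x z) ^ ((2 : ℝ) / 5) *
          (KT2d.V (KT2d.H4 ε) t x z) ^ ((3 : ℝ) / 5))) (by fun_prop) _ ?_ ?_).trans ?_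
  · filter_upwards [hae] with s hs
    filter_upwards [hs] with y hy hz
    exact KT2d.inner_bound C₀ hC₀ t x s y hz (f s y)
      (hf.comp (by fun_prop : Measurable (fun p : EuclideanSpace ℝ (Fin 2) => (s, y, p))))
      (hf0 s y) hy ε hε
  · intro s y h
    simp [h]
  rw [lintegral_const_mul _ (by fun_prop), lintegral_add_left (by fun_prop)]
  have h2 := KT2d.holder_cone t ht x _ hρ2 _ (KT2d.H2_meas ε) (6 * ε ^ (-(1 / 6) : ℝ))
    (by positivity) (fun τ hτ => KT2d.H2_int ε τ hε hτ)
  have h4 := KT2d.holder_cone t ht x _ hρ4 _ (KT2d.H4_meas ε) (2 * ε ^ ((1 : ℝ) / 2))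
    (by positivity) (fun τ hτ => KT2d.H4_int ε τ hε hτ)
  have c2 : ENNReal.ofReal ((6 * Real.pi * (6 * ε ^ (-(1 / 6) : ℝ))) ^ ((3 : ℝ) / 5)) =
      ENNReal.ofReal c * ENNReal.ofReal ε ^ (-(1 / 10) : ℝ) := by
    rw [ENNReal.ofReal_rpow_of_pos hε, ← ENNReal.ofReal_mul hcpos.le, hc,
      show 6 * Real.pi * (6 * ε ^ (-(1 / 6) : ℝ)) = (36 * Real.pi) * ε ^ (-(1 / 6) : ℝ) by ring,
      Real.mul_rpow (by positivity) (by positivity), ← Real.rpow_mul hε.le]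
    norm_num
  have c4 : ENNReal.ofReal ((6 * Real.pi * (2 * ε ^ ((1 : ℝ) / 2))) ^ ((3 : ℝ) / 5)) ≤
      ENNReal.ofReal c * ENNReal.ofReal ε ^ ((3 : ℝ) / 10) := by
    rw [ENNReal.ofReal_rpow_of_pos hε, ← ENNReal.ofReal_mul hcpos.le, hc,
      show 6 * Real.pi * (2 * ε ^ ((1 : ℝ) / 2)) = (12 * Real.pi) * ε ^ ((1 : ℝ) / 2) by ring,
      Real.mul_rpow (by positivity) (by positivity), ← Real.rpow_mul hε.le,
      show (1 : ℝ) / 2 * (3 / 5) = 3 / 10 by norm_num]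
    gcongr
    norm_num
  have eC : (((K * c).toNNReal : ℝ≥0) : ENNReal) = ENNReal.ofReal K * ENNReal.ofReal c := by
    rw [← ENNReal.ofReal_mul hKpos.le]; rfl
  rw [eC]
  refine (mul_le_mul' le_rfl (add_le_add h2 (h4.trans
    (mul_le_mul' le_rfl (mul_le_mul' c4 le_rfl))))).trans (le_of_eq ?_)
  rw [c2]
  ring
end
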